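/- arXiv:1303.4172 — 2 statements merged into one kernel-verified Lean document; each statement's English description precedes it below -/
import Mathlib

section
/- Let ℓ = exp, suppose γ := max_{‖λ‖₁=1} min_i (−(Aλ)_i) satisfies γ ∈ (0,1), and let ε ∈ (0,γ]. Then there exist a shrinkage parameter ν ∈ (0,1] and an integer T such that the boosting iterates {λ_t} with AdaBoost steps α_t = α_ada_t := (ν/2)·ln((1+γ_t)/(1−γ_t)) satisfy M(Aλ_t) ≥ γ − ε for all t ≥ T. More precisely, for any fixed ν ∈ (0,1] and any θ ∈ [0,γ) with θ < Υ_ν(γ), there exists T such that M(Aλ_t) ≥ θ for all t ≥ T. -/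
open Real Finset

noncomputable section

/-- The property that `C` is a valid curvature constant at level `z`:
`C ≥ 1` and `C⁻¹ ≤ eˣ / ℓ⁽ⁱ⁾(x) ≤ C` for all `x ≤ z` and `i ∈ {0,1,2}`. -/
def CBound (ℓ : ℝ → ℝ) (z C : ℝ) : Prop :=
  1 ≤ C ∧ ∀ x ≤ z, ∀ i ≤ 2,
    C⁻¹ ≤ Real.exp x / iteratedDeriv i ℓ x ∧ Real.exp x / iteratedDeriv i ℓ x ≤ C

/-- `C_ℓ(z)`: the least valid curvature constant at level `z`. -/
def Cconst (ℓ : ℝ → ℝ) (z : ℝ) : ℝ := sInf {C : ℝ | CBound ℓ z C}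

/-- Membership in the class `𝕃`: positive, twice continuously differentiable,
strictly convex, and `C_ℓ(z) < ∞` (i.e. some valid constant exists) for every `z`. -/
def MemL (ℓ : ℝ → ℝ) : Prop :=
  (∀ x, 0 < ℓ x) ∧ ContDiff ℝ 2 ℓ ∧ StrictConvexOn ℝ Set.univ ℓ ∧
    ∀ z : ℝ, ∃ C : ℝ, CBound ℓ z C

/-- Membership in `𝕃_∞`: in `𝕃` and moreover `C_ℓ(z) → 1` as `z → −∞`. -/
def MemLinf (ℓ : ℝ → ℝ) : Prop :=
  MemL ℓ ∧ Filter.Tendsto (Cconst ℓ) Filter.atBot (nhds 1)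

variable {m n : ℕ}

/-- The empirical risk `L(Aλ) = (1/m) Σᵢ ℓ((Aλ)ᵢ)`. -/
def LL (ℓ : ℝ → ℝ) (A : Matrix (Fin m) (Fin n) ℝ) (lam : Fin n → ℝ) : ℝ :=
  (∑ i, ℓ (A.mulVec lam i)) / m

/-- The gradient vector `∇L(Aλ)`, with `i`-th entry `ℓ'((Aλ)ᵢ)/m`. -/
def gradL (ℓ : ℝ → ℝ) (A : Matrix (Fin m) (Fin n) ℝ) (lam : Fin n → ℝ) : Fin m → ℝ :=
  fun i => deriv ℓ (A.mulVec lam i) / m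

/-- `‖Aᵀ ∇L(Aλ)‖_∞`. -/
def gInf (ℓ : ℝ → ℝ) (A : Matrix (Fin m) (Fin n) ℝ) (lam : Fin n → ℝ) : ℝ :=
  ⨆ j : Fin n, |∑ i, gradL ℓ A lam i * A i j|

/-- `‖∇L(Aλ)‖₁`. -/
def gOne (ℓ : ℝ → ℝ) (A : Matrix (Fin m) (Fin n) ℝ) (lam : Fin n → ℝ) : ℝ :=
  ∑ i, |gradL ℓ A lam i|

/-- `γ̂ = ‖Aᵀ∇L(Aλ)‖_∞ / ‖∇L(Aλ)‖₁`. -/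
def gammaHat (ℓ : ℝ → ℝ) (A : Matrix (Fin m) (Fin n) ℝ) (lam : Fin n → ℝ) : ℝ :=
  gInf ℓ A lam / gOne ℓ A lam

/-- `C = C_ℓ(ℓ⁻¹(m · L(Aλ)))`. -/
def Cstep (ℓ : ℝ → ℝ) (A : Matrix (Fin m) (Fin n) ℝ) (lam : Fin n → ℝ) : ℝ :=
  Cconst ℓ (Function.invFun ℓ ((m : ℝ) * LL ℓ A lam))

/-- The (minimum `l¹`) margin `M(Aλ) = min_k (−(Aλ)_k) / ‖λ‖₁`. -/
def margin (A : Matrix (Fin m) (Fin n) ℝ) (lam : Fin n → ℝ) : ℝ :=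
  ⨅ k : Fin m, (-(A.mulVec lam k)) / (∑ j, |lam j|)

/-- The maximum margin `γ = max_{‖λ‖₁=1} min_i (−(Aλ)ᵢ)`. -/
def gammaMax (A : Matrix (Fin m) (Fin n) ℝ) : ℝ :=
  sSup {r : ℝ | ∃ lam : Fin n → ℝ, (∑ j, |lam j|) = 1 ∧ r = ⨅ i : Fin m, -(A.mulVec lam i)}

/-- Boosting iterates: `λ₀ = 0`, `λ_t = λ_{t-1} + α_t • v_t` where `v_t` is a signed
standard basis vector satisfying `∇L(Aλ_{t-1})ᵀ A v_t = −‖Aᵀ∇L(Aλ_{t-1})‖_∞`. -/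
def IsBoostSeq (ℓ : ℝ → ℝ) (A : Matrix (Fin m) (Fin n) ℝ)
    (lam : ℕ → Fin n → ℝ) (α : ℕ → ℝ) (v : ℕ → Fin n → ℝ) : Prop :=
  lam 0 = 0 ∧
  (∀ t : ℕ, 1 ≤ t → lam t = lam (t-1) + α t • v t) ∧
  (∀ t : ℕ, 1 ≤ t → ∃ s : ℝ, (s = 1 ∨ s = -1) ∧ ∃ j : Fin n, v t = s • (Pi.single j (1:ℝ) : Fin n → ℝ)) ∧
  (∀ t : ℕ, 1 ≤ t →
    ∑ i, gradL ℓ A (lam (t-1)) i * A.mulVec (v t) i = - gInf ℓ A (lam (t-1)))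

/-- The quantity `Υ_ν(γ)`. -/
def Upsilon (ν γ : ℝ) : ℝ :=
  ((2/ν) * Real.log 2 - (2/ν) * Real.log ((1+γ) ^ (1-ν) + (1-γ) ^ (1-ν))
      - Real.log (1-γ^2)) /
    (Real.log (1+γ) - Real.log (1-γ))

/-!
In the parametrization `γ = tanh x`, the AdaBoost step is `ν x` and `Υ_ν(γ)` is the slope of
`log ∘ cosh` between `(1 - ν) x` and `x`. Convexity of `log ∘ cosh` makes `Υ_ν` monotone, and its
derivative `tanh` gives `Υ_ν(γ) → γ` as `ν → 0⁺`. One step of size `α_t` decreases `log L` by at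
least `α_t Υ_ν(γ_t)`, while weak duality gives `γ_t ≥ γ`. Hence, with `N_t = α_1 + ⋯ + α_t`,
`(Aλ_t)_k ≤ log m - Υ_ν(γ) N_t` for every `k`. Since `‖λ_t‖₁ ≤ N_t → ∞`, the margin eventually
exceeds every `θ < Υ_ν(γ)`.
-/

section LogCosh

theorem slope_le_slope_of_convexOn {𝕜 : Type*} [Field 𝕜] [LinearOrder 𝕜] [IsStrictOrderedRing 𝕜]
    {s : Set 𝕜} {f : 𝕜 → 𝕜} (hf : ConvexOn 𝕜 s f) {a b a' b' : 𝕜} (ha : a ∈ s) (hb : b ∈ s)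
    (ha' : a' ∈ s) (hb' : b' ∈ s) (hab : a < b) (hab' : a' < b')
    (haa' : a ≤ a') (hbb' : b ≤ b') :
    slope f a b ≤ slope f a' b' := by
  have hab'' : a < b' := hab.trans_le hbb'
  calc slope f a b ≤ slope f a b' :=
        hf.slope_mono ha ⟨hb, hab.ne'⟩ ⟨hb', hab''.ne'⟩ hbb'
    _ = slope f b' a := slope_comm f a b'
    _ ≤ slope f b' a' := hf.slope_mono hb' ⟨ha, hab''.ne⟩ ⟨ha', hab'.ne⟩ haa'
    _ = slope f a' b' := slope_comm f b' a'

theorem strictMono_tanh : StrictMono tanh := fun x y hxy =>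
  (artanh_lt_artanh_iff ⟨neg_one_lt_tanh x, tanh_lt_one x⟩
    ⟨neg_one_lt_tanh y, tanh_lt_one y⟩).1 (by rwa [artanh_tanh, artanh_tanh])

theorem exists_pos_tanh_eq {γ : ℝ} (hγ : γ ∈ Set.Ioo 0 1) : ∃ x, 0 < x ∧ tanh x = γ :=
  ⟨artanh γ, artanh_pos hγ, tanh_artanh ⟨neg_one_lt_zero.trans hγ.1, hγ.2⟩⟩

theorem hasDerivAt_log_cosh (x : ℝ) : HasDerivAt (fun y => log (cosh y)) (tanh x) x := by
  rw [tanh_eq_sinh_div_cosh]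
  exact (hasDerivAt_cosh x).log (cosh_pos x).ne'

theorem convexOn_log_cosh : ConvexOn ℝ Set.univ fun x => log (cosh x) := by
  refine Monotone.convexOn_univ_of_deriv
    (fun x => (hasDerivAt_log_cosh x).differentiableAt) ?_
  rw [funext fun x => (hasDerivAt_log_cosh x).deriv]
  exact strictMono_tanh.monotone

theorem log_one_add_tanh (x : ℝ) : log (1 + tanh x) = x - log (cosh x) := by
  have hcosh := (cosh_pos x).ne'
  have h : 1 + tanh x = exp x / cosh x := by
    rw [tanh_eq_sinh_div_cosh, ← cosh_add_sinh]
    field_simp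
  rw [h, log_div (exp_ne_zero x) hcosh, log_exp]

theorem log_one_sub_tanh (x : ℝ) : log (1 - tanh x) = -x - log (cosh x) := by
  simpa only [tanh_neg, cosh_neg, ← sub_eq_add_neg] using log_one_add_tanh (-x)

theorem log_one_add_tanh_rpow_add_one_sub_tanh_rpow (x c : ℝ) :
    log ((1 + tanh x) ^ c + (1 - tanh x) ^ c) =
      log 2 + log (cosh (c * x)) - c * log (cosh x) := by
  have h_add : 0 < 1 + tanh x := by linarith [neg_one_lt_tanh x]
  have h_sub : 0 < 1 - tanh x := sub_pos.2 (tanh_lt_one x)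
  have h : (1 + tanh x) ^ c + (1 - tanh x) ^ c =
      2 * cosh (c * x) / exp (c * log (cosh x)) := by
    rw [rpow_def_of_pos h_add, rpow_def_of_pos h_sub, log_one_add_tanh, log_one_sub_tanh,
      sub_mul, sub_mul, exp_sub, exp_sub, neg_mul, mul_comm (log _), mul_comm x, ← add_div,
      cosh_eq (c * x), mul_div_cancel₀ _ two_ne_zero]
  have h_two_cosh := (mul_pos two_pos (cosh_pos (c * x))).ne'
  rw [h, log_div h_two_cosh (exp_ne_zero _), log_mul two_ne_zero (cosh_pos _).ne', log_exp]

theorem cosh_sub_tanh_mul_sinh (x a : ℝ) :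
    cosh a - tanh x * sinh a = cosh (x - a) / cosh x := by
  have hcosh := (cosh_pos x).ne'
  rw [cosh_sub, tanh_eq_sinh_div_cosh]
  field_simp

end LogCosh

section Rate

open Filter Topology

variable {ν γ : ℝ}

/-- The AdaBoost step `(ν/2) ln ((1 + γ) / (1 - γ))` with shrinkage `ν` for an edge `γ`. -/
def adaStep (ν γ : ℝ) : ℝ := (ν / 2) * log ((1 + γ) / (1 - γ))

theorem adaStep_eq_mul_artanh (ν : ℝ) (hγ : γ ∈ Set.Icc (-1) 1) :
    adaStep ν γ = ν * artanh γ := by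
  rw [adaStep, artanh_eq_half_log hγ]
  ring

theorem adaStep_tanh (ν x : ℝ) : adaStep ν (tanh x) = ν * x := by
  rw [adaStep_eq_mul_artanh ν ⟨(neg_one_lt_tanh x).le, (tanh_lt_one x).le⟩, artanh_tanh]

theorem adaStep_pos (hν : 0 < ν) (hγ : γ ∈ Set.Ioo 0 1) : 0 < adaStep ν γ := by
  obtain ⟨x, hx, rfl⟩ := exists_pos_tanh_eq hγ
  rw [adaStep_tanh]
  exact mul_pos hν hx

theorem monotoneOn_adaStep (hν : 0 ≤ ν) : MonotoneOn (adaStep ν) (Set.Ioo (-1) 1) := by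
  intro γ hγ γ' hγ' h
  rw [adaStep_eq_mul_artanh ν (Set.Ioo_subset_Icc_self hγ),
    adaStep_eq_mul_artanh ν (Set.Ioo_subset_Icc_self hγ')]
  exact mul_le_mul_of_nonneg_left (strictMonoOn_artanh.monotoneOn hγ hγ' h) hν

theorem Upsilon_tanh (hν : ν ≠ 0) (x : ℝ) :
    Upsilon ν (tanh x) = (log (cosh x) - log (cosh ((1 - ν) * x))) / (ν * x) := by
  have h_add : 1 + tanh x ≠ 0 := by linarith [neg_one_lt_tanh x]
  have h_sub : 1 - tanh x ≠ 0 := (sub_pos.2 (tanh_lt_one x)).ne'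
  have h_sq : 1 - tanh x ^ 2 = (1 + tanh x) * (1 - tanh x) := by ring
  rw [Upsilon, log_one_add_tanh_rpow_add_one_sub_tanh_rpow, h_sq, log_mul h_add h_sub,
    log_one_add_tanh, log_one_sub_tanh]
  field_simp
  ring

theorem Upsilon_pos (hν : ν ∈ Set.Ioo 0 2) (hγ : γ ∈ Set.Ioo 0 1) : 0 < Upsilon ν γ := by
  obtain ⟨x, hx, rfl⟩ := exists_pos_tanh_eq hγ
  rw [Upsilon_tanh hν.1.ne']
  have h_abs : |(1 - ν) * x| < |x| := by
    rw [abs_mul]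
    exact mul_lt_of_lt_one_left (abs_pos.2 hx.ne')
      (abs_lt.2 ⟨by linarith [hν.2], by linarith [hν.1]⟩)
  exact div_pos (sub_pos.2 (log_lt_log (cosh_pos _) (cosh_lt_cosh.2 h_abs))) (mul_pos hν.1 hx)

/-- Since `cosh` is even, `(1 - ν) x` may be replaced by `|1 - ν| x`, which increases with `x` also
for `ν > 1`. -/
theorem Upsilon_tanh_eq_slope (hν : ν ≠ 0) {x : ℝ} (hx : x ≠ 0) (hc : |1 - ν| ≠ 1) :
    Upsilon ν (tanh x) =
      (1 - |1 - ν|) / ν * slope (fun y => log (cosh y)) (|1 - ν| * x) x := by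
  have h_even : cosh (|1 - ν| * x) = cosh ((1 - ν) * x) := by
    rw [← cosh_abs, abs_mul, abs_abs, ← abs_mul, cosh_abs]
  have hc' : 1 - |1 - ν| ≠ 0 := sub_ne_zero.2 hc.symm
  rw [Upsilon_tanh hν, slope_def_field, h_even,
    show x - |1 - ν| * x = (1 - |1 - ν|) * x by ring]
  field_simp

theorem monotoneOn_Upsilon (hν : ν ∈ Set.Ioo 0 2) :
    MonotoneOn (Upsilon ν) (Set.Ioo 0 1) := by
  intro γ hγ γ' hγ' h
  obtain ⟨x, hx, rfl⟩ := exists_pos_tanh_eq hγ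
  obtain ⟨y, hy, rfl⟩ := exists_pos_tanh_eq hγ'
  have hxy : x ≤ y := strictMono_tanh.le_iff_le.1 h
  have hc : |1 - ν| < 1 := abs_lt.2 ⟨by linarith [hν.2], by linarith [hν.1]⟩
  rw [Upsilon_tanh_eq_slope hν.1.ne' hx.ne' hc.ne,
    Upsilon_tanh_eq_slope hν.1.ne' hy.ne' hc.ne]
  refine mul_le_mul_of_nonneg_left ?_ (div_nonneg (sub_nonneg.2 hc.le) hν.1.le)
  exact slope_le_slope_of_convexOn convexOn_log_cosh trivial trivial trivial trivial
    (mul_lt_of_lt_one_left hx hc) (mul_lt_of_lt_one_left hy hc)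
    (mul_le_mul_of_nonneg_left hxy (abs_nonneg _)) hxy

theorem tendsto_Upsilon_nhdsGT_zero (hγ : γ ∈ Set.Ioo 0 1) :
    Tendsto (fun ν => Upsilon ν γ) (𝓝[>] 0) (𝓝 γ) := by
  obtain ⟨x, hx, rfl⟩ := exists_pos_tanh_eq hγ
  have h_endpoint : Tendsto (fun ν : ℝ => (1 - ν) * x) (𝓝[>] 0) (𝓝[≠] x) := by
    refine tendsto_nhdsWithin_iff.2 ⟨?_, ?_⟩
    · exact (Continuous.tendsto' (by fun_prop) 0 x (by ring)).mono_left nhdsWithin_le_nhds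
    · filter_upwards [self_mem_nhdsWithin] with ν (hν : 0 < ν)
      have hνx := mul_pos hν hx
      exact ne_of_lt (by linarith)
  refine ((hasDerivAt_log_cosh x).tendsto_slope.comp h_endpoint).congr' ?_
  filter_upwards [self_mem_nhdsWithin] with ν (hν : 0 < ν)
  rw [Function.comp_apply, slope_comm, slope_def_field, Upsilon_tanh hν.ne',
    show x - (1 - ν) * x = ν * x by ring]

theorem exists_lt_Upsilon {θ : ℝ} (hγ : γ ∈ Set.Ioo 0 1) (hθ : θ < γ) :
    ∃ ν ∈ Set.Ioc (0 : ℝ) 1, θ < Upsilon ν γ :=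
  have h_Ioc : ∀ᶠ ν in 𝓝[>] (0 : ℝ), ν ∈ Set.Ioc 0 1 := Ioc_mem_nhdsGT one_pos
  (h_Ioc.and ((tendsto_Upsilon_nhdsGT_zero hγ).eventually_const_lt hθ)).exists

theorem cosh_sub_mul_sinh_adaStep (hν : ν ≠ 0) (hγ : γ ∈ Set.Ioo 0 1) :
    cosh (adaStep ν γ) - γ * sinh (adaStep ν γ) = exp (-(adaStep ν γ * Upsilon ν γ)) := by
  obtain ⟨x, hx, rfl⟩ := exists_pos_tanh_eq hγ
  rw [adaStep_tanh, Upsilon_tanh hν, mul_div_cancel₀ _ (mul_ne_zero hν hx.ne'), neg_sub,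
    exp_sub, exp_log (cosh_pos _), exp_log (cosh_pos _), cosh_sub_tanh_mul_sinh,
    show x - ν * x = (1 - ν) * x by ring]

end Rate

section Edge

variable {ℓ : ℝ → ℝ} {A : Matrix (Fin m) (Fin n) ℝ} {lam v : Fin n → ℝ}

theorem abs_mulVec_le_sum_abs {ι κ : Type*} [Fintype κ] {B : Matrix ι κ ℝ}
    (hB : ∀ i j, |B i j| ≤ 1) (μ : κ → ℝ) (i : ι) : |B.mulVec μ i| ≤ ∑ j, |μ j| := by
  refine (abs_sum_le_sum_abs (fun j => B i j * μ j) univ).trans (sum_le_sum fun j _ => ?_)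
  rw [abs_mul]
  exact mul_le_of_le_one_left (abs_nonneg _) (hB i j)

/-- `v` is an `ℓ¹`-normalized direction of steepest descent of the risk at `lam`. -/
structure IsSteepestDirection (ℓ : ℝ → ℝ) (A : Matrix (Fin m) (Fin n) ℝ)
    (lam v : Fin n → ℝ) : Prop where
  sum_abs : ∑ j, |v j| = 1
  sum_gradL_mul : ∑ i, gradL ℓ A lam i * A.mulVec v i = -gInf ℓ A lam

theorem sum_abs_single {ι : Type*} [Fintype ι] [DecidableEq ι] (j : ι) (s : ℝ) :
    ∑ k, |(Pi.single j s : ι → ℝ) k| = |s| := by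
  rw [Fintype.sum_eq_single j fun k hk => by rw [Pi.single_eq_of_ne hk, abs_zero],
    Pi.single_eq_same]

theorem abs_sum_gradL_mul_mulVec_le (ℓ : ℝ → ℝ) (A : Matrix (Fin m) (Fin n) ℝ)
    (lam μ : Fin n → ℝ) :
    |∑ i, gradL ℓ A lam i * A.mulVec μ i| ≤ (∑ j, |μ j|) * gInf ℓ A lam := by
  have h_adjoint : ∑ i, gradL ℓ A lam i * A.mulVec μ i =
      ∑ j, μ j * ∑ i, gradL ℓ A lam i * A i j := by
    simp only [Matrix.mulVec, dotProduct, mul_sum]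
    rw [sum_comm]
    exact sum_congr rfl fun j _ => sum_congr rfl fun i _ => by ring
  rw [h_adjoint, sum_mul]
  refine (abs_sum_le_sum_abs _ _).trans (sum_le_sum fun j _ => ?_)
  rw [abs_mul]
  exact mul_le_mul_of_nonneg_left
    (le_ciSup (f := fun j => |∑ i, gradL ℓ A lam i * A i j|) (Set.finite_range _).bddAbove j)
    (abs_nonneg _)

theorem gammaHat_nonneg (ℓ : ℝ → ℝ) (A : Matrix (Fin m) (Fin n) ℝ) (lam : Fin n → ℝ) :
    0 ≤ gammaHat ℓ A lam :=
  div_nonneg (iSup_nonneg fun _ => abs_nonneg _) (sum_nonneg fun _ _ => abs_nonneg _)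

theorem le_gammaMax [NeZero m] (hA : ∀ i j, |A i j| ≤ 1) {μ : Fin n → ℝ}
    (hμ : ∑ j, |μ j| = 1) {r : ℝ} (h : ∀ i, r ≤ -A.mulVec μ i) : r ≤ gammaMax A := by
  refine (le_ciInf h).trans (le_csSup ⟨1, ?_⟩ ⟨μ, hμ, rfl⟩)
  rintro _ ⟨κ, hκ, rfl⟩
  calc ⨅ i, -A.mulVec κ i ≤ -A.mulVec κ 0 := ciInf_le (Set.finite_range _).bddBelow 0
    _ ≤ |A.mulVec κ 0| := neg_le_abs _
    _ ≤ 1 := hκ ▸ abs_mulVec_le_sum_abs hA κ 0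

variable [NeZero m] (hℓ : ∀ x, 0 < deriv ℓ x)
include hℓ

theorem gradL_pos (A : Matrix (Fin m) (Fin n) ℝ) (lam : Fin n → ℝ) (i : Fin m) :
    0 < gradL ℓ A lam i :=
  div_pos (hℓ _) (Nat.cast_pos.2 (NeZero.pos m))

theorem gOne_eq_sum_gradL (A : Matrix (Fin m) (Fin n) ℝ) (lam : Fin n → ℝ) :
    gOne ℓ A lam = ∑ i, gradL ℓ A lam i :=
  sum_congr rfl fun i _ => abs_of_pos (gradL_pos hℓ A lam i)

theorem gOne_pos (A : Matrix (Fin m) (Fin n) ℝ) (lam : Fin n → ℝ) : 0 < gOne ℓ A lam := by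
  rw [gOne_eq_sum_gradL hℓ]
  exact sum_pos (fun i _ => gradL_pos hℓ A lam i) univ_nonempty

theorem gammaMax_le_gammaHat (A : Matrix (Fin m) (Fin n) ℝ) (lam : Fin n → ℝ) :
    gammaMax A ≤ gammaHat ℓ A lam := by
  refine Real.sSup_le ?_ (gammaHat_nonneg ℓ A lam)
  rintro _ ⟨μ, hμ, rfl⟩
  rw [gammaHat, le_div_iff₀ (gOne_pos hℓ A lam), gOne_eq_sum_gradL hℓ, mul_sum]
  calc ∑ i, (⨅ k, -A.mulVec μ k) * gradL ℓ A lam i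
      ≤ ∑ i, -A.mulVec μ i * gradL ℓ A lam i := sum_le_sum fun i _ =>
        mul_le_mul_of_nonneg_right (ciInf_le (Set.finite_range _).bddBelow i)
          (gradL_pos hℓ A lam i).le
    _ = -∑ i, gradL ℓ A lam i * A.mulVec μ i := by
        rw [← sum_neg_distrib]
        exact sum_congr rfl fun i _ => by ring
    _ ≤ (∑ j, |μ j|) * gInf ℓ A lam :=
        (neg_le_abs _).trans (abs_sum_gradL_mul_mulVec_le ℓ A lam μ)
    _ = gInf ℓ A lam := by rw [hμ, one_mul]

theorem IsSteepestDirection.gammaHat_lt_one (hv : IsSteepestDirection ℓ A lam v)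
    (hA : ∀ i j, |A i j| ≤ 1) (hγ : gammaMax A < 1) : gammaHat ℓ A lam < 1 := by
  obtain ⟨i₀, hi₀⟩ : ∃ i, -1 < A.mulVec v i := by
    by_contra! h
    exact hγ.not_ge (le_gammaMax hA hv.sum_abs fun i => le_neg.2 (h i))
  have h_row : ∀ i, -1 ≤ A.mulVec v i := fun i =>
    neg_le_of_abs_le (hv.sum_abs ▸ abs_mulVec_le_sum_abs hA v i)
  rw [gammaHat, div_lt_one (gOne_pos hℓ A lam), gOne_eq_sum_gradL hℓ, ← neg_lt_neg_iff,
    ← hv.sum_gradL_mul, ← sum_neg_distrib]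
  refine sum_lt_sum (fun i _ => ?_) ⟨i₀, mem_univ i₀, ?_⟩
  · nlinarith [gradL_pos hℓ A lam i, h_row i]
  · nlinarith [gradL_pos hℓ A lam i₀]

end Edge

section ExpLoss

variable {A : Matrix (Fin m) (Fin n) ℝ} {lam v : Fin n → ℝ}

theorem deriv_exp_pos (x : ℝ) : 0 < deriv exp x := by
  rw [Real.deriv_exp]
  exact exp_pos x

theorem gOne_exp (A : Matrix (Fin m) (Fin n) ℝ) (lam : Fin n → ℝ) :
    gOne exp A lam = LL exp A lam := by
  simp only [gOne, gradL, LL, Real.deriv_exp, sum_div]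
  exact sum_congr rfl fun i _ => abs_of_nonneg (div_nonneg (exp_pos _).le m.cast_nonneg)

variable [NeZero m]

theorem mulVec_le_log_sub_of_LL_exp_le {c : ℝ} (h : LL exp A lam ≤ exp (-c)) (k : Fin m) :
    A.mulVec lam k ≤ log m - c := by
  have hm : (0 : ℝ) < m := Nat.cast_pos.2 (NeZero.pos m)
  have h_exp : exp (A.mulVec lam k) ≤ exp (log m - c) :=
    calc exp (A.mulVec lam k) ≤ ∑ i, exp (A.mulVec lam i) :=
          single_le_sum (f := fun i => exp (A.mulVec lam i)) (fun i _ => (exp_pos _).le)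
            (mem_univ k)
      _ ≤ exp (-c) * m := (div_le_iff₀ hm).1 h
      _ = exp (log m - c) := by rw [sub_eq_add_neg, exp_add, exp_log hm, mul_comm]
  exact exp_le_exp.1 h_exp

theorem IsSteepestDirection.LL_exp_add_smul_le (hv : IsSteepestDirection exp A lam v)
    (hA : ∀ i j, |A i j| ≤ 1) (a : ℝ) :
    LL exp A (lam + a • v) ≤ LL exp A lam * (cosh a - gammaHat exp A lam * sinh a) := by
  have h_gInf : gInf exp A lam = gammaHat exp A lam * LL exp A lam := by
    rw [gammaHat, ← gOne_exp, div_mul_cancel₀ _ (gOne_pos deriv_exp_pos A lam).ne']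
  calc LL exp A (lam + a • v)
      = ∑ i, gradL exp A lam i * exp (A.mulVec v i * a) := by
        rw [LL, sum_div]
        refine sum_congr rfl fun i _ => ?_
        rw [gradL, Real.deriv_exp, Matrix.mulVec_add, Matrix.mulVec_smul, Pi.add_apply,
          Pi.smul_apply, smul_eq_mul, exp_add, mul_comm a]
        ring
    _ ≤ ∑ i, gradL exp A lam i * (cosh a + A.mulVec v i * sinh a) :=
        sum_le_sum fun i _ => mul_le_mul_of_nonneg_left
          (exp_mul_le_cosh_add_mul_sinh (hv.sum_abs ▸ abs_mulVec_le_sum_abs hA v i) a)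
          (gradL_pos deriv_exp_pos A lam i).le
    _ = (∑ i, gradL exp A lam i) * cosh a +
          (∑ i, gradL exp A lam i * A.mulVec v i) * sinh a := by
        simp only [mul_add, sum_add_distrib, sum_mul, mul_assoc]
    _ = LL exp A lam * (cosh a - gammaHat exp A lam * sinh a) := by
        rw [← gOne_eq_sum_gradL deriv_exp_pos, gOne_exp, hv.sum_gradL_mul, h_gInf]
        ring

theorem le_margin (hlam : lam ≠ 0) {θ : ℝ}
    (h : ∀ k, θ * ∑ j, |lam j| ≤ -A.mulVec lam k) : θ ≤ margin A lam := by
  have h_norm : 0 < ∑ j, |lam j| := by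
    obtain ⟨j, hj⟩ := Function.ne_iff.1 hlam
    exact sum_pos' (fun _ _ => abs_nonneg _) ⟨j, mem_univ j, abs_pos.2 hj⟩
  exact le_ciInf fun k => (le_div_iff₀ h_norm).2 (h k)

end ExpLoss

section AdaDescent

open Filter

variable {A : Matrix (Fin m) (Fin n) ℝ} {ν : ℝ} {lam v : ℕ → Fin n → ℝ}

/-- `ℓ¹`-steepest descent for the exponential loss with AdaBoost steps. The directions need not be
signed coordinate vectors, and `v t` is the direction of the step from `lam t` to `lam (t + 1)`,
which is `v_{t+1}` in `IsBoostSeq`. -/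
structure IsAdaDescent (ν : ℝ) (A : Matrix (Fin m) (Fin n) ℝ) (lam v : ℕ → Fin n → ℝ) :
    Prop where
  zero : lam 0 = 0
  succ : ∀ t, lam (t + 1) = lam t + adaStep ν (gammaHat exp A (lam t)) • v t
  isSteepestDirection : ∀ t, IsSteepestDirection exp A (lam t) (v t)

/-- The sum of the first `t` AdaBoost step sizes along the iterates `lam`. -/
def stepSum (ν : ℝ) (A : Matrix (Fin m) (Fin n) ℝ) (lam : ℕ → Fin n → ℝ) (t : ℕ) : ℝ :=
  ∑ s ∈ range t, adaStep ν (gammaHat exp A (lam s))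

theorem stepSum_succ (ν : ℝ) (A : Matrix (Fin m) (Fin n) ℝ) (lam : ℕ → Fin n → ℝ) (t : ℕ) :
    stepSum ν A lam (t + 1) = stepSum ν A lam t + adaStep ν (gammaHat exp A (lam t)) :=
  sum_range_succ _ t

theorem IsBoostSeq.isAdaDescent {α : ℕ → ℝ} (h : IsBoostSeq exp A lam α v)
    (hα : ∀ t : ℕ, 1 ≤ t → α t = (ν / 2) * log
      ((1 + gammaHat exp A (lam (t - 1))) / (1 - gammaHat exp A (lam (t - 1))))) :
    IsAdaDescent ν A lam fun t => v (t + 1) := by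
  obtain ⟨h_zero, h_succ, h_basis, h_grad⟩ := h
  refine ⟨h_zero, fun t => ?_, fun t => ⟨?_, h_grad (t + 1) t.succ_pos⟩⟩
  · rw [h_succ (t + 1) t.succ_pos, hα (t + 1) t.succ_pos]
    rfl
  · obtain ⟨s, hs, j, hj⟩ := h_basis (t + 1) t.succ_pos
    rw [hj, ← Pi.single_smul, sum_abs_single, smul_eq_mul, mul_one]
    rcases hs with rfl | rfl
    · exact abs_one
    · rw [abs_neg, abs_one]

namespace IsAdaDescent

variable [NeZero m]

theorem gammaHat_mem_Ioo (h : IsAdaDescent ν A lam v) (hA : ∀ i j, |A i j| ≤ 1)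
    (hγ : gammaMax A ∈ Set.Ioo 0 1) (t : ℕ) : gammaHat exp A (lam t) ∈ Set.Ioo 0 1 :=
  ⟨hγ.1.trans_le (gammaMax_le_gammaHat deriv_exp_pos A (lam t)),
    (h.isSteepestDirection t).gammaHat_lt_one deriv_exp_pos hA hγ.2⟩

theorem LL_exp_le (h : IsAdaDescent ν A lam v) (hA : ∀ i j, |A i j| ≤ 1)
    (hγ : gammaMax A ∈ Set.Ioo 0 1) (hν : ν ∈ Set.Ioo 0 2) (t : ℕ) :
    LL exp A (lam t) ≤ exp (-(Upsilon ν (gammaMax A) * stepSum ν A lam t)) := by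
  induction t with
  | zero => simp [LL, stepSum, h.zero]
  | succ t ih =>
    set γt := gammaHat exp A (lam t)
    have hγt : γt ∈ Set.Ioo 0 1 := h.gammaHat_mem_Ioo hA hγ t
    have h_rate : Upsilon ν (gammaMax A) ≤ Upsilon ν γt :=
      monotoneOn_Upsilon hν hγ hγt (gammaMax_le_gammaHat deriv_exp_pos A (lam t))
    have h_step := (adaStep_pos hν.1 hγt).le
    calc LL exp A (lam (t + 1))
        ≤ LL exp A (lam t) * exp (-(adaStep ν γt * Upsilon ν γt)) := by
          rw [h.succ, ← cosh_sub_mul_sinh_adaStep hν.1.ne' hγt]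
          exact (h.isSteepestDirection t).LL_exp_add_smul_le hA _
      _ ≤ exp (-(Upsilon ν (gammaMax A) * stepSum ν A lam t)) *
            exp (-(adaStep ν γt * Upsilon ν (gammaMax A))) := by gcongr
      _ = exp (-(Upsilon ν (gammaMax A) * stepSum ν A lam (t + 1))) := by
          rw [← exp_add, stepSum_succ, mul_add, neg_add, mul_comm (adaStep ν γt)]

theorem sum_abs_le_stepSum (h : IsAdaDescent ν A lam v) (hA : ∀ i j, |A i j| ≤ 1)
    (hγ : gammaMax A ∈ Set.Ioo 0 1) (hν : 0 < ν) (t : ℕ) :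
    ∑ j, |lam t j| ≤ stepSum ν A lam t := by
  induction t with
  | zero => simp [stepSum, h.zero]
  | succ t ih =>
    set a := adaStep ν (gammaHat exp A (lam t))
    have ha : 0 < a := adaStep_pos hν (h.gammaHat_mem_Ioo hA hγ t)
    calc ∑ j, |lam (t + 1) j| ≤ ∑ j, (|lam t j| + a * |v t j|) := by
          refine sum_le_sum fun j _ => ?_
          rw [h.succ, Pi.add_apply, Pi.smul_apply, smul_eq_mul]
          refine (abs_add_le _ _).trans_eq ?_
          rw [abs_mul, abs_of_pos ha]
      _ = ∑ j, |lam t j| + a := by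
          rw [sum_add_distrib, ← mul_sum, (h.isSteepestDirection t).sum_abs, mul_one]
      _ ≤ stepSum ν A lam t + a := add_le_add_left ih a
      _ = stepSum ν A lam (t + 1) := (stepSum_succ ν A lam t).symm

theorem tendsto_stepSum_atTop (h : IsAdaDescent ν A lam v) (hA : ∀ i j, |A i j| ≤ 1)
    (hγ : gammaMax A ∈ Set.Ioo 0 1) (hν : 0 < ν) :
    Tendsto (stepSum ν A lam) atTop atTop := by
  refine tendsto_atTop_mono (fun t => ?_)
    (tendsto_natCast_atTop_atTop.atTop_mul_const (adaStep_pos hν hγ))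
  have h_step : ∀ s ∈ range t,
      adaStep ν (gammaMax A) ≤ adaStep ν (gammaHat exp A (lam s)) := fun s _ =>
    have h_sub : Set.Ioo (0 : ℝ) 1 ⊆ Set.Ioo (-1) 1 := Set.Ioo_subset_Ioo_left (by norm_num)
    monotoneOn_adaStep hν.le (h_sub hγ) (h_sub (h.gammaHat_mem_Ioo hA hγ s))
      (gammaMax_le_gammaHat deriv_exp_pos A (lam s))
  simpa only [stepSum, card_range, nsmul_eq_mul] using card_nsmul_le_sum _ _ _ h_step

theorem eventually_le_margin (h : IsAdaDescent ν A lam v) (hA : ∀ i j, |A i j| ≤ 1)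
    (hγ : gammaMax A ∈ Set.Ioo 0 1) (hν : ν ∈ Set.Ioo 0 2) {θ : ℝ} (hθ₀ : 0 ≤ θ)
    (hθ : θ < Upsilon ν (gammaMax A)) : ∀ᶠ t in atTop, θ ≤ margin A (lam t) := by
  filter_upwards [((h.tendsto_stepSum_atTop hA hγ hν.1).const_mul_atTop
    (sub_pos.2 hθ)).eventually_gt_atTop (log m)] with t ht
  have h_row : ∀ k, θ * ∑ j, |lam t j| < -A.mulVec (lam t) k := fun k =>
    calc θ * ∑ j, |lam t j| ≤ θ * stepSum ν A lam t :=
          mul_le_mul_of_nonneg_left (h.sum_abs_le_stepSum hA hγ hν.1 t) hθ₀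
      _ < Upsilon ν (gammaMax A) * stepSum ν A lam t - log m := by linarith
      _ ≤ -A.mulVec (lam t) k := by
          linarith [mulVec_le_log_sub_of_LL_exp_le (h.LL_exp_le hA hγ hν t) k]
  have h_ne : lam t ≠ 0 := by
    intro h_zero
    simpa [h_zero] using h_row 0
  exact le_margin h_ne fun k => (h_row k).le

end IsAdaDescent

theorem margin_ada_exp_general [NeZero m] (hA : ∀ i j, |A i j| ≤ 1)
    (hγ : gammaMax A ∈ Set.Ioo 0 1) (hν : ν ∈ Set.Ioo 0 2) {θ : ℝ}
    (hθ : θ < Upsilon ν (gammaMax A)) (h : IsAdaDescent ν A lam v) :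
    ∃ T : ℕ, ∀ t ≥ T, margin A (lam t) ≥ θ := by
  obtain ⟨T, hT⟩ := eventually_atTop.1 <| h.eventually_le_margin hA hγ hν (le_max_right θ 0)
    (max_lt hθ (Upsilon_pos hν hγ))
  exact ⟨T, fun t ht => (le_max_left θ 0).trans (hT t ht)⟩

end AdaDescent

/-- with the exponential loss and AdaBoost steps, suitable shrinkage
yields margins at least `γ − ε` eventually; more precisely, for any `ν` and any
target `θ ∈ [0,γ)` with `θ < Υ_ν(γ)`, margins are eventually at least `θ`. -/
theorem margin_ada_exp {m n : ℕ} (hm : 0 < m) (hn : 0 < n)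
    (A : Matrix (Fin m) (Fin n) ℝ) (hA : ∀ i j, |A i j| ≤ 1)
    (hγ : gammaMax A ∈ Set.Ioo (0:ℝ) 1)
    (ε : ℝ) (hε : ε ∈ Set.Ioc (0:ℝ) (gammaMax A)) :
    (∃ ν ∈ Set.Ioc (0:ℝ) 1,
      ∀ (lam : ℕ → Fin n → ℝ) (α : ℕ → ℝ) (v : ℕ → Fin n → ℝ),
        IsBoostSeq Real.exp A lam α v →
        (∀ i : ℕ, 1 ≤ i → α i = (ν/2) * Real.log
          ((1 + gammaHat Real.exp A (lam (i-1))) / (1 - gammaHat Real.exp A (lam (i-1))))) →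
        ∃ T : ℕ, ∀ t ≥ T, margin A (lam t) ≥ gammaMax A - ε) ∧
    (∀ ν ∈ Set.Ioc (0:ℝ) 1, ∀ θ : ℝ, 0 ≤ θ → θ < gammaMax A →
      θ < Upsilon ν (gammaMax A) →
      ∀ (lam : ℕ → Fin n → ℝ) (α : ℕ → ℝ) (v : ℕ → Fin n → ℝ),
        IsBoostSeq Real.exp A lam α v →
        (∀ i : ℕ, 1 ≤ i → α i = (ν/2) * Real.log
          ((1 + gammaHat Real.exp A (lam (i-1))) / (1 - gammaHat Real.exp A (lam (i-1))))) →
        ∃ T : ℕ, ∀ t ≥ T, margin A (lam t) ≥ θ) := by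
  have : NeZero m := ⟨hm.ne'⟩
  have h_two {ν : ℝ} (hν : ν ∈ Set.Ioc 0 1) : ν ∈ Set.Ioo 0 2 :=
    ⟨hν.1, hν.2.trans_lt one_lt_two⟩
  obtain ⟨ν, hν, hνε⟩ := exists_lt_Upsilon hγ (sub_lt_self _ hε.1)
  exact ⟨⟨ν, hν, fun _ _ _ hB hα =>
      margin_ada_exp_general hA hγ (h_two hν) hνε (hB.isAdaDescent hα)⟩,
    fun _ hν _ _ _ hθ _ _ _ hB hα =>
      margin_ada_exp_general hA hγ (h_two hν) hθ (hB.isAdaDescent hα)⟩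
end
end

section
/- Let A ∈ {−1,+1}^{m×n} be a binary boosting matrix, let ℓ ∈ 𝕃_∞, suppose γ := max_{‖λ‖₁=1} min_i (−(Aλ)_i) satisfies γ ∈ (0,1), and let ε > 0. Then there exist a shrinkage parameter ν ∈ (0,1] and an integer T such that the boosting iterates {λ_t} with shrunk optimal steps α_t = α_opt_t := ν·α*_t, where α*_t minimizes α ↦ L(A(λ_{t−1} + α·v_t)), satisfy M(Aλ_t) ≥ γ − ε for all t ≥ T. -/
open Real Finset

noncomputable section

variable {m n : ℕ}

/-!
Along a direction `a ∈ {−1,+1}^ι` the loss derivative splits into a mass `P` on the coordinates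
with `aᵢ = 1` and a mass `N` on those with `aᵢ = −1`. Once the loss is small it is nearly
exponential, so after a step of size `t` the ratio `N / P` has dropped by the factor `e^(−2t)` up to
constants close to `1`. An edge of `tanh η` means `N / P ≥ e^(2η)`, and the exact minimiser has
`N = P`; it therefore lies at distance at least about `η`, and on the first fraction `ν` of the way
towards it the edge stays above about `tanh ((1 − ν) η)`. Hence for any smaller `ρ` the potential
`L(Aλ) · exp (ρ ‖λ‖₁)` is eventually nonincreasing. Since `L(Aλ) → 0` forces `‖λ‖₁ → ∞`, this bounds
the margin below by any `ρ < tanh ((1 − ν) η)`, and `η = artanh γ`, `ν → 0` gives `γ`.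
-/

lemma abs_sub_sub_deriv_mul_le {f f' f'' : ℝ → ℝ} {x y K : ℝ}
    (hf : ∀ u ∈ Set.uIcc x y, HasDerivAt f (f' u) u)
    (hf' : ∀ u ∈ Set.uIcc x y, HasDerivAt f' (f'' u) u) (hK : ∀ u ∈ Set.uIcc x y, |f'' u| ≤ K) :
    |f y - f x - f' x * (y - x)| ≤ K * (y - x) ^ 2 := by
  have hK0 : 0 ≤ K := (abs_nonneg _).trans (hK x Set.left_mem_uIcc)
  have hderiv : ∀ u ∈ Set.uIcc x y, |f' u - f' x| ≤ K * |y - x| := fun u hu =>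
    ((convex_uIcc x y).norm_image_sub_le_of_norm_hasDerivWithin_le
      (fun w hw => (hf' w hw).hasDerivWithinAt) hK Set.left_mem_uIcc hu).trans <|
      mul_le_mul_of_nonneg_left (Set.abs_sub_left_of_mem_uIcc hu) hK0
  have hremainder := (convex_uIcc x y).norm_image_sub_le_of_norm_hasDerivWithin_le
    (f := fun u => f u - f' x * u)
    (fun u hu => ((hf u hu).sub (hasDerivAt_const_mul (f' x))).hasDerivWithinAt) hderiv
    Set.left_mem_uIcc Set.right_mem_uIcc
  calc |f y - f x - f' x * (y - x)| = |f y - f' x * y - (f x - f' x * x)| := by ring_nf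
    _ ≤ K * |y - x| * |y - x| := hremainder
    _ = K * (y - x) ^ 2 := by rw [mul_assoc, abs_mul_abs_self, sq]

lemma le_mul_exp_of_deriv_le {f f' : ℝ → ℝ} {b K : ℝ} (hb : 0 ≤ b)
    (hf : ∀ t, HasDerivAt f (f' t) t) (hK : ∀ t ∈ Set.Ico 0 b, f' t ≤ K * f t) :
    f b ≤ f 0 * exp (K * b) := by
  have hgronwall := le_gronwallBound_of_liminf_deriv_right_le (f := f) (f' := f') (ε := 0)
    (fun t _ => (hf t).continuousAt.continuousWithinAt)
    (fun t _ _ hr => (hf t).hasDerivWithinAt.liminf_right_slope_le hr) le_rfl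
    (fun t ht => (hK t ht).trans_eq (add_zero _).symm) b (Set.right_mem_Icc.2 hb)
  simpa only [gronwallBound_ε0, sub_zero] using hgronwall

lemma tanh_mul_add_le_sub_iff {θ p q : ℝ} :
    tanh θ * (p + q) ≤ q - p ↔ exp θ * p ≤ exp (-θ) * q := by
  rw [tanh_eq_sinh_div_cosh, div_mul_eq_mul_div, div_le_iff₀ (cosh_pos θ), ← cosh_add_sinh,
    ← cosh_sub_sinh]
  constructor <;> intro h <;> linarith

lemma tanh_pos {θ : ℝ} (hθ : 0 < θ) : 0 < tanh θ := by
  rw [tanh_eq_sinh_div_cosh]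
  exact div_pos (sinh_pos_iff.2 hθ) (cosh_pos θ)

lemma continuous_tanh : Continuous tanh := by
  simp_rw [funext tanh_eq_sinh_div_cosh]
  exact continuous_sinh.div continuous_cosh fun θ => (cosh_pos θ).ne'

lemma exists_pos_lt_exp_mul_tanh {ν η ρ : ℝ} (hρ : ρ < tanh ((1 - ν) * η)) :
    ∃ κ, 0 < κ ∧ ρ < exp (-(2 * κ)) * tanh ((1 - ν) * (η - 2 * κ) - 2 * κ) := by
  have hcont : Continuous fun κ : ℝ =>
      exp (-(2 * κ)) * tanh ((1 - ν) * (η - 2 * κ) - 2 * κ) :=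
    (by fun_prop : Continuous fun κ : ℝ => exp (-(2 * κ))).mul (continuous_tanh.comp (by fun_prop))
  have hlim := hcont.tendsto' 0 (tanh ((1 - ν) * η)) (by simp)
  exact (((hlim.eventually_const_lt hρ).filter_mono nhdsWithin_le_nhds).and
    (self_mem_nhdsWithin (s := Set.Ioi 0))).exists.imp fun _ => And.symm

lemma exists_mem_Ioo_lt_tanh_mul_artanh {γ ρ : ℝ} (hγ : γ ∈ Set.Ioo (-1) 1) (hρ : ρ < γ) :
    ∃ ν ∈ Set.Ioo (0 : ℝ) 1, ρ < tanh ((1 - ν) * artanh γ) := by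
  have hcont : Continuous fun ν : ℝ => tanh ((1 - ν) * artanh γ) :=
    continuous_tanh.comp (by fun_prop)
  have hlim := hcont.tendsto' 0 γ (by simp [tanh_artanh hγ])
  exact (((hlim.eventually_const_lt hρ).filter_mono nhdsWithin_le_nhds).and
    (Ioo_mem_nhdsGT one_pos)).exists.imp fun _ => And.symm

namespace CBound

variable {ℓ : ℝ → ℝ} {z C C' x y : ℝ} {i j : ℕ}

lemma mono (h : CBound ℓ z C) (hC : C ≤ C') : CBound ℓ z C' :=
  ⟨h.1.trans hC, fun x hx i hi =>
    ⟨(inv_anti₀ (one_pos.trans_le h.1) hC).trans (h.2 x hx i hi).1, (h.2 x hx i hi).2.trans hC⟩⟩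

lemma iteratedDeriv_pos (h : CBound ℓ z C) (hx : x ≤ z) (hi : i ≤ 2) : 0 < iteratedDeriv i ℓ x :=
  (div_pos_iff_of_pos_left (exp_pos x)).1 <|
    (inv_pos.2 (one_pos.trans_le h.1)).trans_le (h.2 x hx i hi).1

lemma exp_le (h : CBound ℓ z C) (hx : x ≤ z) (hi : i ≤ 2) : exp x ≤ C * iteratedDeriv i ℓ x :=
  (div_le_iff₀ (h.iteratedDeriv_pos hx hi)).1 (h.2 x hx i hi).2

lemma iteratedDeriv_le (h : CBound ℓ z C) (hx : x ≤ z) (hi : i ≤ 2) :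
    iteratedDeriv i ℓ x ≤ C * exp x := by
  rw [← inv_mul_le_iff₀ (one_pos.trans_le h.1)]
  exact (le_div_iff₀ (h.iteratedDeriv_pos hx hi)).1 (h.2 x hx i hi).1

lemma iteratedDeriv_le_iteratedDeriv (h : CBound ℓ z C) (hx : x ≤ z) (hy : y ≤ z) (hi : i ≤ 2)
    (hj : j ≤ 2) : iteratedDeriv i ℓ x ≤ C ^ 2 * exp (x - y) * iteratedDeriv j ℓ y := by
  have hC : 0 < C := one_pos.trans_le h.1
  calc iteratedDeriv i ℓ x ≤ C * exp x := h.iteratedDeriv_le hx hi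
    _ = C * exp (x - y) * exp y := by rw [mul_assoc, ← exp_add, sub_add_cancel]
    _ ≤ C * exp (x - y) * (C * iteratedDeriv j ℓ y) := by gcongr; exact h.exp_le hy hj
    _ = C ^ 2 * exp (x - y) * iteratedDeriv j ℓ y := by ring

end CBound

lemma MemLinf.exists_CBound {ℓ : ℝ → ℝ} (h : MemLinf ℓ) {C : ℝ} (hC : 1 < C) :
    ∃ z, CBound ℓ z C := by
  obtain ⟨z, hz⟩ := (h.2.eventually (gt_mem_nhds hC)).exists
  obtain ⟨C', hC', hlt⟩ := exists_lt_of_csInf_lt (h.1.2.2.2 z) hz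
  exact ⟨z, CBound.mono hC' hlt.le⟩

namespace MemL

variable {ℓ : ℝ → ℝ}

lemma iteratedDeriv_pos (h : MemL ℓ) {i : ℕ} (hi : i ≤ 2) (x : ℝ) : 0 < iteratedDeriv i ℓ x :=
  let ⟨_, hC⟩ := h.2.2.2 x
  hC.iteratedDeriv_pos le_rfl hi

lemma deriv_pos (h : MemL ℓ) (x : ℝ) : 0 < deriv ℓ x := by
  simpa only [iteratedDeriv_one] using h.iteratedDeriv_pos one_le_two x

lemma hasDerivAt (h : MemL ℓ) (x : ℝ) : HasDerivAt ℓ (deriv ℓ x) x :=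
  (h.2.1.differentiable two_ne_zero x).hasDerivAt

lemma hasDerivAt_deriv (h : MemL ℓ) (x : ℝ) : HasDerivAt (deriv ℓ) (iteratedDeriv 2 ℓ x) x := by
  have hdiff : Differentiable ℝ (iteratedDeriv 1 ℓ) :=
    h.2.1.differentiable_iteratedDeriv 1 (by norm_num)
  simpa only [iteratedDeriv_succ, iteratedDeriv_zero] using (hdiff x).hasDerivAt

lemma strictMono (h : MemL ℓ) : StrictMono ℓ :=
  strictMono_of_deriv_pos h.deriv_pos

lemma exists_ge (h : MemL ℓ) (M : ℝ) : ∃ z, M ≤ ℓ z := by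
  have hD : 0 < deriv ℓ 0 := h.deriv_pos 0
  set z := |M| / deriv ℓ 0 + 1
  have hz0 : 0 < z := by positivity
  have hslope := h.2.2.1.convexOn.le_slope_of_hasDerivAt (Set.mem_univ 0) (Set.mem_univ z) hz0
    (h.hasDerivAt 0)
  rw [slope_def_field, sub_zero, le_div_iff₀ hz0] at hslope
  refine ⟨z, ?_⟩
  calc M ≤ |M| := le_abs_self M
    _ = deriv ℓ 0 * (|M| / deriv ℓ 0) := (mul_div_cancel₀ _ hD.ne').symm
    _ ≤ deriv ℓ 0 * z := by gcongr; linarith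
    _ ≤ ℓ z := by linarith [h.1 0]

end MemL

section TotalLoss

variable {ι : Type*} [Fintype ι]

/-- The sum `∑ᵢ f(xᵢ)`. At `x = Aλ` this is `m · L(Aλ)` for `f = ℓ` and `m · ‖∇L(Aλ)‖₁` for
`f = deriv ℓ`. -/
def totalLoss (f : ℝ → ℝ) (x : ι → ℝ) : ℝ := ∑ i, f (x i)

/-- The derivative of `totalLoss ℓ` at `x` in the direction `a`. -/
def lossSlope (ℓ : ℝ → ℝ) (x a : ι → ℝ) : ℝ := ∑ i, deriv ℓ (x i) * a i

/-- The part of `totalLoss (deriv ℓ) x` carried by the coordinates on which the direction `a` takes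
the value `σ`; for `a ∈ {−1,+1}^ι` these are the examples the direction `a` misclassifies (`σ = 1`)
and classifies correctly (`σ = −1`). -/
def signMass (ℓ : ℝ → ℝ) (x a : ι → ℝ) (σ : ℝ) : ℝ := ∑ i with a i = σ, deriv ℓ (x i)

/-- `s` is an exact line search step from the margins `x` along the binary direction `a`, where `a`
has edge at least `γ` at `x`, that is `⟨∇L, a⟩ ≤ -γ ‖∇L‖₁` (the weak learning assumption). -/
structure IsLineSearchStep (ℓ : ℝ → ℝ) (γ : ℝ) (x a : ι → ℝ) (s : ℝ) : Prop where
  binary : ∀ i, a i = 1 ∨ a i = -1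
  edge : lossSlope ℓ x a ≤ -(γ * totalLoss (deriv ℓ) x)
  isMin : ∀ β : ℝ, totalLoss ℓ (x + s • a) ≤ totalLoss ℓ (x + β • a)

variable {ℓ : ℝ → ℝ} {x a : ι → ℝ} {z C γ η κ θ ρ ν s t u : ℝ}

lemma totalLoss_pos [Nonempty ι] {f : ℝ → ℝ} (hf : ∀ x, 0 < f x) (x : ι → ℝ) :
    0 < totalLoss f x :=
  Finset.sum_pos (fun i _ => hf (x i)) Finset.univ_nonempty

namespace MemL

lemma le_totalLoss (h : MemL ℓ) (x : ι → ℝ) (i : ι) : ℓ (x i) ≤ totalLoss ℓ x :=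
  Finset.single_le_sum (f := fun i => ℓ (x i)) (fun j _ => (h.1 (x j)).le) (Finset.mem_univ i)

lemma le_of_totalLoss_le (h : MemL ℓ) (hx : totalLoss ℓ x ≤ ℓ z) (i : ι) : x i ≤ z :=
  h.strictMono.le_iff_le.1 ((h.le_totalLoss x i).trans hx)

lemma convexOn_totalLoss_ray (h : MemL ℓ) (x a : ι → ℝ) :
    ConvexOn ℝ Set.univ fun t : ℝ => totalLoss ℓ (x + t • a) := by
  refine ⟨convex_univ, fun t _ u _ p q hp hq hpq => ?_⟩
  simp only [totalLoss, smul_eq_mul, Finset.mul_sum, ← Finset.sum_add_distrib]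
  refine Finset.sum_le_sum fun i _ => ?_
  have hpoint : (x + (p * t + q * u) • a) i = p * (x + t • a) i + q * (x + u • a) i := by
    simp only [Pi.add_apply, Pi.smul_apply, smul_eq_mul]
    linear_combination -(x i) * hpq
  rw [hpoint]
  exact h.2.2.1.convexOn.2 (Set.mem_univ _) (Set.mem_univ _) hp hq hpq

lemma hasDerivAt_totalLoss_ray (h : MemL ℓ) (x a : ι → ℝ) (t : ℝ) :
    HasDerivAt (fun t : ℝ => totalLoss ℓ (x + t • a)) (lossSlope ℓ (x + t • a) a) t := by
  refine HasDerivAt.fun_sum fun i _ => ?_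
  have hcoord : HasDerivAt (fun t : ℝ => (x + t • a) i) (a i) t :=
    (hasDerivAt_mul_const (a i)).const_add (x i)
  exact (h.hasDerivAt _).comp t hcoord

lemma totalLoss_add_smul_le (h : MemL ℓ) (hb : CBound ℓ (z + 1) C) (ha : ∀ i, |a i| ≤ 1)
    (hx : ∀ i, x i ≤ z) (ht : |t| ≤ 1) :
    totalLoss ℓ (x + t • a) ≤
      (1 + C ^ 2 * exp 1 * t ^ 2) * totalLoss ℓ x + t * lossSlope ℓ x a := by
  simp only [totalLoss, lossSlope, Finset.mul_sum, ← Finset.sum_add_distrib]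
  refine Finset.sum_le_sum fun i _ => ?_
  have hstep : |t * a i| ≤ 1 := by
    rw [abs_mul]
    exact mul_le_one₀ ht (abs_nonneg _) (ha i)
  have hcurv : ∀ w ∈ Set.uIcc (x i) (x i + t * a i),
      |iteratedDeriv 2 ℓ w| ≤ C ^ 2 * exp 1 * ℓ (x i) := by
    intro w hw
    have hwx : w - x i ≤ 1 := (le_abs_self _).trans <|
      (Set.abs_sub_left_of_mem_uIcc hw).trans (by rwa [add_sub_cancel_left])
    rw [abs_of_pos (h.iteratedDeriv_pos le_rfl w)]
    calc iteratedDeriv 2 ℓ w ≤ C ^ 2 * exp (w - x i) * ℓ (x i) := by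
          simpa only [iteratedDeriv_zero] using hb.iteratedDeriv_le_iteratedDeriv
            (i := 2) (j := 0) (by linarith [hx i]) (by linarith [hx i]) le_rfl zero_le_two
      _ ≤ C ^ 2 * exp 1 * ℓ (x i) := by gcongr; exact (h.1 _).le
  have htaylor := (abs_le.1 (abs_sub_sub_deriv_mul_le (fun w _ => h.hasDerivAt w)
    (fun w _ => h.hasDerivAt_deriv w) hcurv)).2
  have hsq : (t * a i) ^ 2 ≤ t ^ 2 := by
    rw [mul_pow]
    exact mul_le_of_le_one_right (sq_nonneg t) ((sq_le_one_iff_abs_le_one _).2 (ha i))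
  have hquad : C ^ 2 * exp 1 * ℓ (x i) * (t * a i) ^ 2 ≤ C ^ 2 * exp 1 * ℓ (x i) * t ^ 2 :=
    mul_le_mul_of_nonneg_left hsq (by have := (h.1 (x i)).le; positivity)
  rw [add_sub_cancel_left] at htaylor
  simp only [Pi.add_apply, Pi.smul_apply, smul_eq_mul]
  linarith

end MemL

lemma CBound.totalLoss_le_totalLoss_deriv (hb : CBound ℓ z C) (hx : ∀ i, x i ≤ z) :
    totalLoss ℓ x ≤ C ^ 2 * totalLoss (deriv ℓ) x := by
  rw [totalLoss, totalLoss, Finset.mul_sum]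
  refine Finset.sum_le_sum fun i _ => ?_
  simpa only [iteratedDeriv_zero, iteratedDeriv_one, sub_self, exp_zero, mul_one] using
    hb.iteratedDeriv_le_iteratedDeriv (i := 0) (j := 1) (hx i) (hx i) zero_le_two one_le_two

lemma totalLoss_deriv_eq_signMass_add (ha : ∀ i, a i = 1 ∨ a i = -1) :
    totalLoss (deriv ℓ) x = signMass ℓ x a 1 + signMass ℓ x a (-1) := by
  simp only [totalLoss, signMass, Finset.sum_filter, ← Finset.sum_add_distrib]
  refine Finset.sum_congr rfl fun i _ => ?_
  rcases ha i with hi | hi <;> norm_num [hi]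

lemma lossSlope_eq_signMass_sub (ha : ∀ i, a i = 1 ∨ a i = -1) :
    lossSlope ℓ x a = signMass ℓ x a 1 - signMass ℓ x a (-1) := by
  simp only [lossSlope, signMass, Finset.sum_filter, ← Finset.sum_sub_distrib]
  refine Finset.sum_congr rfl fun i _ => ?_
  rcases ha i with hi | hi <;> norm_num [hi]

lemma lossSlope_le_neg_tanh_mul_iff (ha : ∀ i, a i = 1 ∨ a i = -1) :
    lossSlope ℓ x a ≤ -(tanh θ * totalLoss (deriv ℓ) x) ↔
      exp θ * signMass ℓ x a 1 ≤ exp (-θ) * signMass ℓ x a (-1) := by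
  rw [← tanh_mul_add_le_sub_iff, lossSlope_eq_signMass_sub ha, totalLoss_deriv_eq_signMass_add ha,
    le_neg, neg_sub]

lemma CBound.signMass_ray_le (hb : CBound ℓ z (exp κ)) (ht : ∀ i, (x + t • a) i ≤ z)
    (hu : ∀ i, (x + u • a) i ≤ z) (σ : ℝ) :
    signMass ℓ (x + t • a) a σ ≤ exp (2 * κ + σ * (t - u)) * signMass ℓ (x + u • a) a σ := by
  rw [signMass, signMass, Finset.mul_sum]
  refine Finset.sum_le_sum fun i hi => ?_
  have hexp : exp (2 * κ + σ * (t - u)) = exp κ ^ 2 * exp ((x + t • a) i - (x + u • a) i) := by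
    rw [← exp_nat_mul, ← exp_add, ← (Finset.mem_filter.1 hi).2]
    simp only [Pi.add_apply, Pi.smul_apply, smul_eq_mul, Nat.cast_ofNat]
    ring_nf
  rw [hexp]
  simpa only [iteratedDeriv_one] using
    hb.iteratedDeriv_le_iteratedDeriv (i := 1) (j := 1) (ht i) (hu i) one_le_two one_le_two

lemma CBound.signMass_nonneg (hb : CBound ℓ z C) (hx : ∀ i, x i ≤ z) (σ : ℝ) :
    0 ≤ signMass ℓ x a σ :=
  Finset.sum_nonneg fun i _ => by
    simpa only [iteratedDeriv_one] using (hb.iteratedDeriv_pos (hx i) one_le_two).le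

lemma CBound.lossSlope_ray_le (hb : CBound ℓ z (exp κ)) (ha : ∀ i, a i = 1 ∨ a i = -1)
    (ht : ∀ i, (x + t • a) i ≤ z) (hs : ∀ i, (x + s • a) i ≤ z)
    (hs0 : lossSlope ℓ (x + s • a) a = 0) (hθ : θ ≤ s - t - 2 * κ) :
    lossSlope ℓ (x + t • a) a ≤ -(tanh θ * totalLoss (deriv ℓ) (x + t • a)) := by
  rw [lossSlope_le_neg_tanh_mul_iff ha]
  calc exp θ * signMass ℓ (x + t • a) a 1
      ≤ exp θ * (exp (2 * κ + 1 * (t - s)) * signMass ℓ (x + s • a) a 1) := by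
        gcongr
        exact hb.signMass_ray_le ht hs 1
    _ = exp (θ + (2 * κ + 1 * (t - s))) * signMass ℓ (x + s • a) a 1 := by
        rw [← mul_assoc, ← exp_add]
    _ ≤ signMass ℓ (x + s • a) a 1 :=
        mul_le_of_le_one_left (hb.signMass_nonneg hs 1) (exp_le_one_iff.2 (by linarith))
    _ = signMass ℓ (x + s • a) a (-1) :=
        sub_eq_zero.1 ((lossSlope_eq_signMass_sub ha).symm.trans hs0)
    _ ≤ exp (2 * κ + -1 * (s - t)) * signMass ℓ (x + t • a) a (-1) := hb.signMass_ray_le hs ht (-1)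
    _ ≤ exp (-θ) * signMass ℓ (x + t • a) a (-1) := by
        have := hb.signMass_nonneg (a := a) ht (-1)
        gcongr
        linarith

lemma CBound.le_add_of_lossSlope_le [Nonempty ι] (hb : CBound ℓ z (exp κ))
    (ha : ∀ i, a i = 1 ∨ a i = -1) (hx : ∀ i, x i ≤ z) (hs : ∀ i, (x + s • a) i ≤ z)
    (hs0 : lossSlope ℓ (x + s • a) a = 0)
    (hedge : lossSlope ℓ x a ≤ -(tanh η * totalLoss (deriv ℓ) x)) : η ≤ s + 2 * κ := by
  have hzero : ∀ i, (x + (0 : ℝ) • a) i ≤ z := by simpa only [zero_smul, add_zero] using hx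
  have hbal : signMass ℓ (x + s • a) a 1 = signMass ℓ (x + s • a) a (-1) :=
    sub_eq_zero.1 ((lossSlope_eq_signMass_sub ha).symm.trans hs0)
  have hpos : 0 < signMass ℓ (x + s • a) a 1 := by
    have hsum : 0 < totalLoss (deriv ℓ) (x + s • a) := Finset.sum_pos (fun i _ => by
      simpa only [iteratedDeriv_one] using hb.iteratedDeriv_pos (hs i) one_le_two)
      Finset.univ_nonempty
    rw [totalLoss_deriv_eq_signMass_add ha, ← hbal] at hsum
    linarith
  have hP := hb.signMass_ray_le hs hzero 1
  have hN := hb.signMass_ray_le hzero hs (-1)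
  rw [zero_smul, add_zero] at hP hN
  rw [lossSlope_le_neg_tanh_mul_iff ha] at hedge
  have hcompare : exp (η - (2 * κ + s)) * signMass ℓ (x + s • a) a 1 ≤
      exp (-η + (2 * κ + s)) * signMass ℓ (x + s • a) a 1 :=
    calc exp (η - (2 * κ + s)) * signMass ℓ (x + s • a) a 1
        ≤ exp (η - (2 * κ + s)) * (exp (2 * κ + 1 * (s - 0)) * signMass ℓ x a 1) := by gcongr
      _ = exp η * signMass ℓ x a 1 := by rw [← mul_assoc, ← exp_add]; ring_nf
      _ ≤ exp (-η) * signMass ℓ x a (-1) := hedge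
      _ ≤ exp (-η) * (exp (2 * κ + -1 * (0 - s)) * signMass ℓ (x + s • a) a (-1)) := by gcongr
      _ = exp (-η + (2 * κ + s)) * signMass ℓ (x + s • a) a 1 := by
        rw [← mul_assoc, ← exp_add, hbal]; ring_nf
  have hexp := exp_le_exp.1 (le_of_mul_le_mul_right hcompare hpos)
  linarith

namespace IsLineSearchStep

lemma lossSlope_eq_zero (hstep : IsLineSearchStep ℓ γ x a s) (h : MemL ℓ) :
    lossSlope ℓ (x + s • a) a = 0 :=
  IsLocalMin.hasDerivAt_eq_zero (Filter.Eventually.of_forall hstep.isMin)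
    (h.hasDerivAt_totalLoss_ray x a s)

lemma nonneg [Nonempty ι] (hstep : IsLineSearchStep ℓ γ x a s) (h : MemL ℓ) (hγ : 0 < γ) :
    0 ≤ s := by
  by_contra! hs
  have hslope := (h.convexOn_totalLoss_ray x a).slope_le_of_hasDerivAt (Set.mem_univ s)
    (Set.mem_univ 0) hs (h.hasDerivAt_totalLoss_ray x a 0)
  rw [slope_def_field, zero_smul, add_zero] at hslope
  have hedge : lossSlope ℓ x a < 0 :=
    hstep.edge.trans_lt (neg_neg_of_pos (mul_pos hγ (totalLoss_pos h.deriv_pos x)))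
  have hmin := hstep.isMin 0
  rw [zero_smul, add_zero] at hmin
  have hquot : 0 ≤ (totalLoss ℓ x - totalLoss ℓ (x + s • a)) / (0 - s) :=
    div_nonneg (sub_nonneg.2 hmin) (by linarith)
  linarith

lemma totalLoss_ray_le (hstep : IsLineSearchStep ℓ γ x a s) (h : MemL ℓ)
    (ht : t ∈ Set.Icc 0 s) : totalLoss ℓ (x + t • a) ≤ totalLoss ℓ x := by
  have hmax := (h.convexOn_totalLoss_ray x a).le_max_of_mem_Icc (Set.mem_univ 0) (Set.mem_univ s) ht
  rwa [max_eq_left (hstep.isMin 0), zero_smul, add_zero] at hmax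

lemma totalLoss_le (hstep : IsLineSearchStep ℓ γ x a s) (h : MemL ℓ) (hγ : γ ∈ Set.Icc 0 1)
    (hb : CBound ℓ (z + 1) C) (hx : ∀ i, x i ≤ z) :
    totalLoss ℓ (x + s • a) ≤ (1 - γ ^ 2 / (4 * C ^ 6 * exp 1)) * totalLoss ℓ x := by
  have hC : 0 < C := one_pos.trans_le hb.1
  -- This step size minimises the quadratic upper bound below.
  set β := γ / (2 * C ^ 4 * exp 1) with hβ
  have hβ0 : 0 ≤ β := div_nonneg hγ.1 (by positivity)
  have hβ1 : |β| ≤ 1 := by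
    rw [abs_of_nonneg hβ0]
    refine div_le_one_of_le₀ (hγ.2.trans ?_) (by positivity)
    have hC4 : 1 ≤ C ^ 4 := one_le_pow₀ hb.1
    have he : 1 ≤ exp 1 := one_le_exp zero_le_one
    nlinarith
  have ha : ∀ i, |a i| ≤ 1 := fun i => by rcases hstep.binary i with hi | hi <;> simp [hi]
  have hgrad : totalLoss ℓ x / C ^ 2 ≤ totalLoss (deriv ℓ) x := by
    rw [div_le_iff₀' (by positivity)]
    exact hb.totalLoss_le_totalLoss_deriv fun i => (hx i).trans (by linarith)
  calc totalLoss ℓ (x + s • a) ≤ totalLoss ℓ (x + β • a) := hstep.isMin β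
    _ ≤ (1 + C ^ 2 * exp 1 * β ^ 2) * totalLoss ℓ x + β * lossSlope ℓ x a :=
        h.totalLoss_add_smul_le hb ha hx hβ1
    _ ≤ (1 + C ^ 2 * exp 1 * β ^ 2) * totalLoss ℓ x + β * -(γ * (totalLoss ℓ x / C ^ 2)) := by
        gcongr
        exact hstep.edge.trans (neg_le_neg (mul_le_mul_of_nonneg_left hgrad hγ.1))
    _ = (1 - γ ^ 2 / (4 * C ^ 6 * exp 1)) * totalLoss ℓ x := by
        rw [hβ]
        field_simp
        ring

lemma totalLoss_shrunk_le (hstep : IsLineSearchStep ℓ γ x a s) (h : MemL ℓ)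
    (hγ : γ ∈ Set.Icc 0 1) (hb : CBound ℓ (z + 1) C) (hx : ∀ i, x i ≤ z) (hν : ν ∈ Set.Icc 0 1) :
    totalLoss ℓ (x + (ν * s) • a) ≤
      (1 - ν * (γ ^ 2 / (4 * C ^ 6 * exp 1))) * totalLoss ℓ x := by
  have hconv := (h.convexOn_totalLoss_ray x a).2 (Set.mem_univ 0) (Set.mem_univ s)
    (sub_nonneg.2 hν.2) hν.1 (sub_add_cancel 1 ν)
  simp only [smul_eq_mul, mul_zero, zero_add, zero_smul, add_zero] at hconv
  linarith [mul_le_mul_of_nonneg_left (hstep.totalLoss_le h hγ hb hx) hν.1]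

lemma totalLoss_shrunk_le_mul_exp [Nonempty ι] (hstep : IsLineSearchStep ℓ (tanh η) x a s)
    (h : MemL ℓ) (hη : 0 < η) (hb : CBound ℓ z (exp κ)) (hx : totalLoss ℓ x ≤ ℓ z)
    (hν : ν ∈ Set.Icc 0 1) (hρ0 : 0 ≤ ρ)
    (hρ : ρ ≤ exp (-(2 * κ)) * tanh ((1 - ν) * (η - 2 * κ) - 2 * κ)) :
    totalLoss ℓ (x + (ν * s) • a) ≤ totalLoss ℓ x * exp (-ρ * (ν * s)) := by
  have hs : 0 ≤ s := hstep.nonneg h (tanh_pos hη)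
  have hray : ∀ t ∈ Set.Icc 0 s, ∀ i, (x + t • a) i ≤ z := fun t ht =>
    h.le_of_totalLoss_le ((hstep.totalLoss_ray_le h ht).trans hx)
  have hend := hray s (Set.right_mem_Icc.2 hs)
  have hlarge : η ≤ s + 2 * κ := hb.le_add_of_lossSlope_le hstep.binary (h.le_of_totalLoss_le hx)
    hend (hstep.lossSlope_eq_zero h) hstep.edge
  set θ := (1 - ν) * (η - 2 * κ) - 2 * κ
  have hedge : ∀ t ∈ Set.Ico 0 (ν * s),
      lossSlope ℓ (x + t • a) a ≤ -ρ * totalLoss ℓ (x + t • a) := by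
    intro t ht
    have hts : t ∈ Set.Icc 0 s := ⟨ht.1, ht.2.le.trans (mul_le_of_le_one_left hs hν.2)⟩
    have hθ : θ ≤ s - t - 2 * κ := by
      have : (1 - ν) * (η - 2 * κ) ≤ (1 - ν) * s :=
        mul_le_mul_of_nonneg_left (by linarith) (sub_nonneg.2 hν.2)
      linarith [ht.2]
    have hθ0 : 0 ≤ tanh θ := nonneg_of_mul_nonneg_right (hρ0.trans hρ) (exp_pos _)
    have hgrad : exp (-(2 * κ)) * totalLoss ℓ (x + t • a) ≤ totalLoss (deriv ℓ) (x + t • a) := by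
      rw [exp_neg, inv_mul_le_iff₀ (exp_pos _), two_mul, exp_add, ← sq]
      exact hb.totalLoss_le_totalLoss_deriv (hray t hts)
    calc lossSlope ℓ (x + t • a) a ≤ -(tanh θ * totalLoss (deriv ℓ) (x + t • a)) :=
          hb.lossSlope_ray_le hstep.binary (hray t hts) hend (hstep.lossSlope_eq_zero h) hθ
      _ ≤ -(tanh θ * (exp (-(2 * κ)) * totalLoss ℓ (x + t • a))) := by gcongr
      _ = -(exp (-(2 * κ)) * tanh θ * totalLoss ℓ (x + t • a)) := by ring
      _ ≤ -(ρ * totalLoss ℓ (x + t • a)) :=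
          neg_le_neg (mul_le_mul_of_nonneg_right hρ (totalLoss_pos h.1 _).le)
      _ = -ρ * totalLoss ℓ (x + t • a) := (neg_mul _ _).symm
  simpa only [zero_smul, add_zero] using
    le_mul_exp_of_deriv_le (mul_nonneg hν.1 hs) (h.hasDerivAt_totalLoss_ray x a) hedge

end IsLineSearchStep

end TotalLoss

section Iterates

variable {ι : Type*} [Fintype ι] {ℓ : ℝ → ℝ} {x a : ℕ → ι → ℝ} {s N : ℕ → ℝ} {z γ η κ ρ ν : ℝ}

lemma MemL.tendsto_atBot_of_totalLoss (h : MemL ℓ)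
    (hx : Filter.Tendsto (fun t => totalLoss ℓ (x t)) Filter.atTop (nhds 0)) (i : ι) :
    Filter.Tendsto (fun t => x t i) Filter.atTop Filter.atBot :=
  Filter.tendsto_atBot.2 fun M => (hx.eventually (ge_mem_nhds (h.1 M))).mono fun _ ht =>
    h.le_of_totalLoss_le ht i

variable [Nonempty ι]

lemma antitone_totalLoss_iterates (h : MemL ℓ) (hγ : 0 < γ) (hν : ν ∈ Set.Icc 0 1)
    (hx : ∀ t, x (t + 1) = x t + (ν * s t) • a t)
    (hs : ∀ t, IsLineSearchStep ℓ γ (x t) (a t) (s t)) :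
    Antitone fun t => totalLoss ℓ (x t) :=
  antitone_nat_of_succ_le fun t => by
    have hs0 : 0 ≤ s t := (hs t).nonneg h hγ
    rw [hx t]
    exact (hs t).totalLoss_ray_le h ⟨mul_nonneg hν.1 hs0, mul_le_of_le_one_left hs0 hν.2⟩

lemma tendsto_totalLoss_iterates (h : MemL ℓ) (hγ : γ ∈ Set.Ioc 0 1) (hν : ν ∈ Set.Ioc 0 1)
    (hx : ∀ t, x (t + 1) = x t + (ν * s t) • a t)
    (hs : ∀ t, IsLineSearchStep ℓ γ (x t) (a t) (s t)) :
    Filter.Tendsto (fun t => totalLoss ℓ (x t)) Filter.atTop (nhds 0) := by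
  obtain ⟨z, hz⟩ := h.exists_ge (totalLoss ℓ (x 0))
  obtain ⟨C, hb⟩ := h.2.2.2 (z + 1)
  have hC : 0 < C := one_pos.trans_le hb.1
  set q := 1 - ν * (γ ^ 2 / (4 * C ^ 6 * exp 1))
  have hcontract : ∀ t, totalLoss ℓ (x (t + 1)) ≤ q * totalLoss ℓ (x t) := fun t => by
    have hxz : totalLoss ℓ (x t) ≤ ℓ z :=
      (antitone_totalLoss_iterates h hγ.1 (Set.Ioc_subset_Icc_self hν) hx hs t.zero_le).trans hz
    rw [hx t]
    exact (hs t).totalLoss_shrunk_le h (Set.Ioc_subset_Icc_self hγ) hb (h.le_of_totalLoss_le hxz)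
      (Set.Ioc_subset_Icc_self hν)
  have hq0 : 0 ≤ q := nonneg_of_mul_nonneg_left
    ((totalLoss_pos h.1 _).le.trans (hcontract 0)) (totalLoss_pos h.1 (x 0))
  have hq1 : q < 1 := by
    have hγ0 := hγ.1
    have hν0 := hν.1
    exact sub_lt_self 1 (by positivity)
  refine squeeze_zero (fun t => (totalLoss_pos h.1 (x t)).le)
    (fun t => le_geom (u := fun t => totalLoss ℓ (x t)) hq0 t fun k _ => hcontract k) ?_
  simpa only [zero_mul] using (tendsto_pow_atTop_nhds_zero_of_lt_one hq0 hq1).mul_const _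

lemma exists_eventually_mul_le_sub_iterates (h : MemL ℓ) (hη : 0 < η) (hb : CBound ℓ z (exp κ))
    (hν : ν ∈ Set.Icc 0 1) (hρ0 : 0 ≤ ρ)
    (hρ : ρ ≤ exp (-(2 * κ)) * tanh ((1 - ν) * (η - 2 * κ) - 2 * κ))
    (hx : ∀ t, x (t + 1) = x t + (ν * s t) • a t)
    (hs : ∀ t, IsLineSearchStep ℓ (tanh η) (x t) (a t) (s t))
    (hz : ∀ᶠ t in Filter.atTop, totalLoss ℓ (x t) ≤ ℓ z) (hN : ∀ t, N (t + 1) ≤ N t + ν * s t) :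
    ∃ K, ∀ᶠ t in Filter.atTop, ∀ i, ρ * N t ≤ K - x t i := by
  obtain ⟨T, hT⟩ := Filter.eventually_atTop.1 hz
  set B := totalLoss ℓ (x T) * exp (ρ * N T) with hB
  have hpotential : ∀ t ≥ T, totalLoss ℓ (x t) * exp (ρ * N t) ≤ B := fun t ht => by
    induction t, ht using Nat.le_induction with
    | base => exact hB.ge
    | succ t ht ih =>
      refine le_trans ?_ ih
      calc totalLoss ℓ (x (t + 1)) * exp (ρ * N (t + 1))
          ≤ totalLoss ℓ (x t) * exp (-ρ * (ν * s t)) * exp (ρ * (N t + ν * s t)) := by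
            rw [hx t]
            gcongr
            · exact mul_nonneg (totalLoss_pos h.1 _).le (exp_pos _).le
            · exact (hs t).totalLoss_shrunk_le_mul_exp h hη hb (hT t ht) hν hρ0 hρ
            · exact hN t
        _ = totalLoss ℓ (x t) * exp (ρ * N t) := by
            rw [mul_assoc, ← exp_add]
            ring_nf
  refine ⟨κ + log B, Filter.eventually_atTop.2 ⟨T, fun t ht i => ?_⟩⟩
  have hB0 : 0 < B := mul_pos (totalLoss_pos h.1 _) (exp_pos _)
  have hexp : exp (x t i + ρ * N t) ≤ exp (κ + log B) :=
    calc exp (x t i + ρ * N t) = exp (x t i) * exp (ρ * N t) := exp_add _ _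
      _ ≤ exp κ * totalLoss ℓ (x t) * exp (ρ * N t) := by
          gcongr
          refine (hb.exp_le (h.le_of_totalLoss_le (hT t ht) i) zero_le_two).trans ?_
          rw [iteratedDeriv_zero]
          gcongr
          exact h.le_totalLoss (x t) i
      _ ≤ exp κ * B := by
          rw [mul_assoc]
          gcongr
          exact hpotential t ht
      _ = exp (κ + log B) := by rw [exp_add, exp_log hB0]
  linarith [exp_le_exp.1 hexp]

end Iterates

lemma tendsto_sum_abs_of_tendsto_mulVec {A : Matrix (Fin m) (Fin n) ℝ} {lam : ℕ → Fin n → ℝ}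
    {i : Fin m} (h : Filter.Tendsto (fun t => A.mulVec (lam t) i) Filter.atTop Filter.atBot) :
    Filter.Tendsto (fun t => ∑ j, |lam t j|) Filter.atTop Filter.atTop := by
  have hbound : ∀ t, -A.mulVec (lam t) i ≤ (∑ j, |A i j| + 1) * ∑ j, |lam t j| := fun t =>
    calc -A.mulVec (lam t) i ≤ |A.mulVec (lam t) i| := neg_le_abs _
      _ = |∑ j, A i j * lam t j| := rfl
      _ ≤ ∑ j, |A i j| * |lam t j| := by
          simp only [← abs_mul]
          exact Finset.abs_sum_le_sum_abs _ _
      _ ≤ ∑ j, (∑ k, |A i k| + 1) * |lam t j| := by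
          gcongr with j
          exact (Finset.single_le_sum (f := fun k => |A i k|) (fun _ _ => abs_nonneg _)
            (Finset.mem_univ j)).trans (le_add_of_nonneg_right zero_le_one)
      _ = (∑ j, |A i j| + 1) * ∑ j, |lam t j| := (Finset.mul_sum _ _ _).symm
  exact (Filter.tendsto_const_mul_atTop_of_pos (by positivity)).1
    (Filter.tendsto_atTop_mono hbound (Filter.tendsto_neg_atBot_atTop.comp h))

lemma sum_abs_add_smul_le {u v : Fin n → ℝ} {c : ℝ} (hc : 0 ≤ c) (hv : ∑ j, |v j| ≤ 1) :
    ∑ j, |(u + c • v) j| ≤ ∑ j, |u j| + c :=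
  calc ∑ j, |(u + c • v) j| ≤ ∑ j, (|u j| + c * |v j|) :=
        Finset.sum_le_sum fun j _ => (abs_add_le _ _).trans_eq <| by
          rw [Pi.smul_apply, smul_eq_mul, abs_mul, abs_of_nonneg hc]
    _ = ∑ j, |u j| + c * ∑ j, |v j| := by rw [Finset.sum_add_distrib, Finset.mul_sum]
    _ ≤ ∑ j, |u j| + c := add_le_add_right (mul_le_of_le_one_right hc hv) _

lemma gammaMax_mul_sum_le (A : Matrix (Fin m) (Fin n) ℝ) {w : Fin m → ℝ} (hw : ∀ i, 0 ≤ w i) :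
    gammaMax A * ∑ i, w i ≤ ⨆ j : Fin n, |∑ i, w i * A i j| := by
  have hsup : 0 ≤ ⨆ j : Fin n, |∑ i, w i * A i j| := Real.iSup_nonneg fun _ => abs_nonneg _
  rcases (Finset.sum_nonneg fun i _ => hw i).eq_or_lt with hzero | hpos
  · rwa [← hzero, mul_zero]
  rw [← le_div_iff₀ hpos]
  refine Real.sSup_le ?_ (div_nonneg hsup hpos.le)
  rintro _ ⟨u, hu, rfl⟩
  rw [le_div_iff₀ hpos]
  calc (⨅ i, -A.mulVec u i) * ∑ i, w i ≤ ∑ i, -A.mulVec u i * w i := by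
        rw [Finset.mul_sum]
        exact Finset.sum_le_sum fun i _ =>
          mul_le_mul_of_nonneg_right (ciInf_le (Set.finite_range _).bddBelow i) (hw i)
    _ = ∑ j, -(u j * ∑ i, w i * A i j) := by
        simp only [Matrix.mulVec, dotProduct, neg_mul, Finset.sum_mul, Finset.mul_sum,
          Finset.sum_neg_distrib]
        rw [Finset.sum_comm]
        exact congrArg Neg.neg (Finset.sum_congr rfl fun j _ => Finset.sum_congr rfl fun i _ => by
          ring)
    _ ≤ ∑ j, |u j| * ⨆ j : Fin n, |∑ i, w i * A i j| :=
        Finset.sum_le_sum fun j _ => (neg_le_abs _).trans <| by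
          rw [abs_mul]
          exact mul_le_mul_of_nonneg_left
            (le_ciSup (f := fun j => |∑ i, w i * A i j|) (Set.finite_range _).bddAbove j)
            (abs_nonneg _)
    _ = ⨆ j : Fin n, |∑ i, w i * A i j| := by rw [← Finset.sum_mul, hu, one_mul]

namespace IsBoostSeq

variable {ℓ : ℝ → ℝ} {A : Matrix (Fin m) (Fin n) ℝ} {lam v : ℕ → Fin n → ℝ} {α : ℕ → ℝ}

lemma sum_abs_eq_one (h : IsBoostSeq ℓ A lam α v) (t : ℕ) : ∑ j, |v (t + 1) j| = 1 := by
  obtain ⟨σ, hσ, j, hv⟩ := h.2.2.1 (t + 1) (Nat.le_add_left 1 t)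
  rcases hσ with rfl | rfl <;> simp [hv, Pi.single_apply, apply_ite abs]

lemma mulVec_eq_one_or_eq_neg_one (h : IsBoostSeq ℓ A lam α v)
    (hA : ∀ i j, A i j = 1 ∨ A i j = -1) (t : ℕ) (i : Fin m) :
    A.mulVec (v (t + 1)) i = 1 ∨ A.mulVec (v (t + 1)) i = -1 := by
  obtain ⟨σ, hσ, j, hv⟩ := h.2.2.1 (t + 1) (Nat.le_add_left 1 t)
  rcases hσ with rfl | rfl <;> rcases hA i j with hij | hij <;>
    simp [hv, hij, Matrix.mulVec_neg]

lemma isLineSearchStep (h : IsBoostSeq ℓ A lam α v) (hm : 0 < m)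
    (hA : ∀ i j, A i j = 1 ∨ A i j = -1) (hℓ : MemL ℓ) {αstar : ℕ → ℝ}
    (hmin : ∀ t : ℕ, 1 ≤ t → ∀ β : ℝ,
      LL ℓ A (lam (t - 1) + αstar t • v t) ≤ LL ℓ A (lam (t - 1) + β • v t)) (t : ℕ) :
    IsLineSearchStep ℓ (gammaMax A) (A.mulVec (lam t)) (A.mulVec (v (t + 1))) (αstar (t + 1)) where
  binary := h.mulVec_eq_one_or_eq_neg_one hA t
  edge := by
    have hmR : (0 : ℝ) < m := Nat.cast_pos.2 hm
    have hedge : lossSlope ℓ (A.mulVec (lam t)) (A.mulVec (v (t + 1))) / m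
        = -gInf ℓ A (lam t) := by
      simpa only [lossSlope, Finset.sum_div, gradL, div_mul_eq_mul_div, Nat.add_sub_cancel] using
        h.2.2.2 (t + 1) (Nat.le_add_left 1 t)
    have hdual : gammaMax A * (totalLoss (deriv ℓ) (A.mulVec (lam t)) / m) ≤ gInf ℓ A (lam t) := by
      rw [totalLoss, Finset.sum_div]
      exact gammaMax_mul_sum_le A fun i => div_nonneg (hℓ.deriv_pos _).le hmR.le
    rw [← mul_div_assoc, ← neg_le_neg_iff, ← hedge, ← neg_div] at hdual
    exact (div_le_div_iff_of_pos_right hmR).1 hdual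
  isMin := fun β => by
    have hLL := hmin (t + 1) (Nat.le_add_left 1 t) β
    simp only [LL, Matrix.mulVec_add, Matrix.mulVec_smul] at hLL
    exact (div_le_div_iff_of_pos_right (Nat.cast_pos.2 hm)).1 hLL

end IsBoostSeq

theorem margin_opt_binary_general (hm : 0 < m) {A : Matrix (Fin m) (Fin n) ℝ} {ℓ : ℝ → ℝ}
    (hℓ : MemLinf ℓ) {γ ν ρ : ℝ} (hγ : γ ∈ Set.Ioo 0 1) (hν : ν ∈ Set.Ioo 0 1)
    (hρ : ρ < tanh ((1 - ν) * artanh γ)) {lam v : ℕ → Fin n → ℝ} {s : ℕ → ℝ}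
    (hv : ∀ t, ∑ j, |v t j| ≤ 1) (hlam : ∀ t, lam (t + 1) = lam t + (ν * s t) • v t)
    (hs : ∀ t, IsLineSearchStep ℓ γ (A.mulVec (lam t)) (A.mulVec (v t)) (s t)) :
    ∀ᶠ t in Filter.atTop, ρ ≤ margin A (lam t) := by
  have : Nonempty (Fin m) := Fin.pos_iff_nonempty.1 hm
  set η := artanh γ
  have hη : 0 < η := artanh_pos hγ
  have hγη : tanh η = γ := tanh_artanh ⟨by linarith [hγ.1], hγ.2⟩
  obtain ⟨ρ', hρ', hρtanh⟩ := exists_between <|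
    max_lt hρ (tanh_pos (mul_pos (sub_pos.2 hν.2) hη))
  obtain ⟨hρρ', hρ'_pos⟩ := max_lt_iff.1 hρ'
  obtain ⟨κ, hκ, hρκ⟩ := exists_pos_lt_exp_mul_tanh hρtanh
  obtain ⟨z, hz⟩ := hℓ.exists_CBound (one_lt_exp_iff.2 hκ)
  have hx : ∀ t, A.mulVec (lam (t + 1)) = A.mulVec (lam t) + (ν * s t) • A.mulVec (v t) :=
    fun t => by rw [hlam t, Matrix.mulVec_add, Matrix.mulVec_smul]
  have hN : ∀ t, ∑ j, |lam (t + 1) j| ≤ ∑ j, |lam t j| + ν * s t := fun t =>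
    hlam t ▸ sum_abs_add_smul_le (mul_nonneg hν.1.le ((hs t).nonneg hℓ.1 hγ.1)) (hv t)
  have hloss := tendsto_totalLoss_iterates hℓ.1 (Set.Ioo_subset_Ioc_self hγ)
    (Set.Ioo_subset_Ioc_self hν) hx hs
  obtain ⟨K, hK⟩ := exists_eventually_mul_le_sub_iterates (N := fun t => ∑ j, |lam t j|) hℓ.1 hη hz
    (Set.Ioo_subset_Icc_self hν) hρ'_pos.le hρκ.le hx (hγη.symm ▸ hs)
    (hloss.eventually (ge_mem_nhds (hℓ.1.1 z))) hN
  have hNtop := tendsto_sum_abs_of_tendsto_mulVec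
    (hℓ.1.tendsto_atBot_of_totalLoss hloss (Classical.arbitrary (Fin m)))
  filter_upwards [hK, hNtop.eventually_gt_atTop 0,
    hNtop.eventually_ge_atTop (K / (ρ' - ρ))] with t hKt hpos hlarge
  refine le_ciInf fun k => (le_div_iff₀ hpos).2 ?_
  rw [div_le_iff₀' (sub_pos.2 hρρ')] at hlarge
  linarith [hKt k]

/-- with a binary matrix, a loss in `𝕃_∞`, and shrunk optimal steps,
suitable shrinkage yields margins at least `γ − ε` eventually. -/
theorem margin_opt_binary {m n : ℕ} (hm : 0 < m) (hn : 0 < n)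
    (A : Matrix (Fin m) (Fin n) ℝ) (hA : ∀ i j, A i j = 1 ∨ A i j = -1)
    (ℓ : ℝ → ℝ) (hℓ : MemLinf ℓ)
    (hγ : gammaMax A ∈ Set.Ioo (0:ℝ) 1)
    (ε : ℝ) (hε : 0 < ε) :
    ∃ ν ∈ Set.Ioc (0:ℝ) 1,
      ∀ (lam : ℕ → Fin n → ℝ) (α : ℕ → ℝ) (v : ℕ → Fin n → ℝ) (αstar : ℕ → ℝ),
        IsBoostSeq ℓ A lam α v →
        (∀ t : ℕ, 1 ≤ t → ∀ β : ℝ,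
          LL ℓ A (lam (t-1) + αstar t • v t) ≤ LL ℓ A (lam (t-1) + β • v t)) →
        (∀ t : ℕ, 1 ≤ t → α t = ν * αstar t) →
        ∃ T : ℕ, ∀ t ≥ T, margin A (lam t) ≥ gammaMax A - ε := by
  obtain ⟨ν, hν, hlt⟩ := exists_mem_Ioo_lt_tanh_mul_artanh ⟨by linarith [hγ.1], hγ.2⟩
    (sub_lt_self (gammaMax A) hε)
  refine ⟨ν, Set.Ioo_subset_Ioc_self hν, fun lam α v αstar hboost hmin hα => ?_⟩
  refine Filter.eventually_atTop.1 (margin_opt_binary_general hm hℓ hγ hν hlt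
    (fun t => (hboost.sum_abs_eq_one t).le) (fun t => ?_)
    fun t => hboost.isLineSearchStep hm hA hℓ.1 hmin t)
  rw [hboost.2.1 (t + 1) (Nat.le_add_left 1 t), hα (t + 1) (Nat.le_add_left 1 t),
    Nat.add_sub_cancel]
end
end
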